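/- Let X₁,…,Xₙ be mutually independent random variables with finitely many values, let T be a random variable that is a deterministic function of Xⁿ=(X₁,…,Xₙ), let Aⁿ=(A₁,…,Aₙ) be a deterministic function of T, and let Yⁿ=(Y₁,…,Yₙ) be finite-valued random variables satisfying H(Yⁿ|(Aⁿ,Xⁿ)) = ∑ᵢ H(Yᵢ|(Aᵢ,Xᵢ)). Then H(T) ≥ ∑_{i=1}^{n} [ I(Xᵢ;Aᵢ) + I(Xᵢ;Uᵢ | Yᵢ,Aᵢ) ], where Uᵢ = (A^{n∖i}, Y^{n∖i}, X^{i−1}, T), with A^{n∖i} and Y^{n∖i} denoting all components except the i-th and X^{i−1}=(X₁,…,X_{i−1}). -/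

import Mathlib

open scoped BigOperators

set_option synthInstance.maxSize 512
set_option synthInstance.maxHeartbeats 1000000

noncomputable section

/-- Probability mass of the event `f = a` under the weight function `q` on a finite space. -/
def pmass {Ω α : Type*} [Fintype Ω] [DecidableEq α] (q : Ω → ℝ) (f : Ω → α) (a : α) : ℝ :=
  ∑ ω, if f ω = a then q ω else 0

/-- Shannon entropy (in bits) of the value of `f` under `q`. -/
def ent {Ω α : Type*} [Fintype Ω] [Fintype α] [DecidableEq α] (q : Ω → ℝ) (f : Ω → α) : ℝ :=
  -∑ a, pmass q f a * Real.logb 2 (pmass q f a)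

/-- Conditional Shannon entropy `H(f ∣ g)` (in bits). -/
def condEnt {Ω α β : Type*} [Fintype Ω] [Fintype α] [DecidableEq α] [Fintype β] [DecidableEq β]
    (q : Ω → ℝ) (f : Ω → α) (g : Ω → β) : ℝ :=
  ent q (fun ω => (f ω, g ω)) - ent q g

/-- Mutual information `I(f ; g)` (in bits). -/
def mutInf {Ω α β : Type*} [Fintype Ω] [Fintype α] [DecidableEq α] [Fintype β] [DecidableEq β]
    (q : Ω → ℝ) (f : Ω → α) (g : Ω → β) : ℝ :=
  ent q f + ent q g - ent q (fun ω => (f ω, g ω))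

/-- Conditional mutual information `I(f ; g ∣ h)` (in bits). -/
def condMutInf {Ω α β γ : Type*} [Fintype Ω] [Fintype α] [DecidableEq α] [Fintype β]
    [DecidableEq β] [Fintype γ] [DecidableEq γ]
    (q : Ω → ℝ) (f : Ω → α) (g : Ω → β) (h : Ω → γ) : ℝ :=
  condEnt q f h - condEnt q f (fun ω => (g ω, h ω))

/-- `q` is a probability mass function on `Ω`. -/
def IsPMF {Ω : Type*} [Fintype Ω] (q : Ω → ℝ) : Prop :=
  (∀ ω, 0 ≤ q ω) ∧ ∑ ω, q ω = 1

theorem sum_q_comp {Ω α : Type*} [Fintype Ω] [Fintype α] [DecidableEq α] (q : Ω → ℝ) (f : Ω → α)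
    (F : α → ℝ) : ∑ ω, q ω * F (f ω) = ∑ a, pmass q f a * F a := by
  simp only [pmass, Finset.sum_mul]
  rw [Finset.sum_comm]
  refine Finset.sum_congr rfl fun ω _ => ?_
  simp [ite_mul]

theorem ent_eq {Ω α : Type*} [Fintype Ω] [Fintype α] [DecidableEq α] (q : Ω → ℝ) (f : Ω → α) :
    ent q f = -∑ ω, q ω * Real.logb 2 (pmass q f (f ω)) := by
  rw [ent, ← sum_q_comp q f (fun a => Real.logb 2 (pmass q f a))]

theorem ent_congr {Ω α β : Type*} [Fintype Ω] [Fintype α] [DecidableEq α] [Fintype β]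
    [DecidableEq β] (q : Ω → ℝ) (f : Ω → α) (g : Ω → β)
    (h : ∀ ω ω', f ω = f ω' ↔ g ω = g ω') : ent q f = ent q g := by
  rw [ent_eq, ent_eq]
  simp only [pmass, h]

theorem pmass_nonneg {Ω α : Type*} [Fintype Ω] [DecidableEq α] {q : Ω → ℝ}
    (hq : ∀ ω, 0 ≤ q ω) (f : Ω → α) (a : α) : 0 ≤ pmass q f a := by
  refine Finset.sum_nonneg fun ω _ => ?_
  split_ifs
  · exact hq ω
  · exact le_rfl

theorem pmass_pos {Ω α : Type*} [Fintype Ω] [DecidableEq α] {q : Ω → ℝ}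
    (hq : ∀ ω, 0 ≤ q ω) (f : Ω → α) (ω : Ω) (h : 0 < q ω) : 0 < pmass q f (f ω) := by
  refine Finset.sum_pos' (fun ω' _ => ?_) ⟨ω, Finset.mem_univ _, by simpa using h⟩
  split_ifs
  · exact hq ω'
  · exact le_rfl

theorem sum_pmass_pair {Ω α γ : Type*} [Fintype Ω] [Fintype α] [DecidableEq α]
    [DecidableEq γ] (q : Ω → ℝ) (f : Ω → α) (h : Ω → γ) (c : γ) :
    ∑ a, pmass q (fun ω => (f ω, h ω)) (a, c) = pmass q h c := by
  simp only [pmass]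
  rw [Finset.sum_comm]
  refine Finset.sum_congr rfl fun ω _ => ?_
  by_cases hc : h ω = c <;> simp [Prod.ext_iff, hc]

theorem sum_pmass {Ω α : Type*} [Fintype Ω] [Fintype α] [DecidableEq α]
    (q : Ω → ℝ) (f : Ω → α) : ∑ a, pmass q f a = ∑ ω, q ω := by
  simpa using (sum_q_comp q f (fun _ => 1)).symm

theorem ent_submod {Ω α β γ : Type*} [Fintype Ω] [Fintype α] [DecidableEq α] [Fintype β]
    [DecidableEq β] [Fintype γ] [DecidableEq γ] (q : Ω → ℝ) (hq : IsPMF q)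
    (f : Ω → α) (g : Ω → β) (h : Ω → γ) :
    ent q (fun ω => (f ω, g ω, h ω)) + ent q h ≤
      ent q (fun ω => (f ω, h ω)) + ent q (fun ω => (g ω, h ω)) := by
  obtain ⟨h0, h1⟩ := hq
  set R : α × β × γ → ℝ := fun x =>
    pmass q (fun ω => (f ω, h ω)) (x.1, x.2.2) * pmass q (fun ω => (g ω, h ω)) (x.2.1, x.2.2) /
      (pmass q (fun ω => (f ω, g ω, h ω)) x * pmass q h x.2.2) with hR
  have key : ∑ ω, q ω * R (f ω, g ω, h ω) ≤ 1 := by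
    rw [sum_q_comp q (fun ω => (f ω, g ω, h ω)) R]
    calc ∑ x, pmass q (fun ω => (f ω, g ω, h ω)) x * R x
        ≤ ∑ x : α × β × γ, pmass q (fun ω => (f ω, h ω)) (x.1, x.2.2) *
            pmass q (fun ω => (g ω, h ω)) (x.2.1, x.2.2) / pmass q h x.2.2 := by
          refine Finset.sum_le_sum fun x _ => ?_
          have a1 := pmass_nonneg h0 (fun ω => (f ω, h ω)) (x.1, x.2.2)
          have a2 := pmass_nonneg h0 (fun ω => (g ω, h ω)) (x.2.1, x.2.2)
          have a3 := pmass_nonneg h0 h x.2.2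
          rcases (pmass_nonneg h0 (fun ω => (f ω, g ω, h ω)) x).eq_or_lt with h' | h'
          · rw [← h', zero_mul]; positivity
          · apply le_of_eq
            simp only [hR]
            rw [mul_div_assoc', mul_div_mul_left _ _ h'.ne']
      _ = ∑ c, pmass q h c := by
          rw [Fintype.sum_prod_type]
          simp only [Fintype.sum_prod_type]
          rw [Finset.sum_congr rfl fun a _ => Finset.sum_comm, Finset.sum_comm]
          refine Finset.sum_congr rfl fun c _ => ?_
          simp only [← Finset.sum_div, ← Finset.mul_sum, ← Finset.sum_mul, sum_pmass_pair]
          exact mul_self_div_self _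
      _ = 1 := by rw [sum_pmass, h1]
  have hl2 : 0 < Real.log 2 := Real.log_pos one_lt_two
  have pt : ∀ ω, q ω * Real.logb 2 (pmass q (fun ω => (f ω, h ω)) (f ω, h ω))
      + q ω * Real.logb 2 (pmass q (fun ω => (g ω, h ω)) (g ω, h ω))
      - q ω * Real.logb 2 (pmass q (fun ω => (f ω, g ω, h ω)) (f ω, g ω, h ω))
      - q ω * Real.logb 2 (pmass q h (h ω)) ≤ (q ω * R (f ω, g ω, h ω) - q ω) / Real.log 2 := by
    intro ω
    rcases (h0 ω).eq_or_lt with h' | h'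
    · simp [← h']
    · have b1 := pmass_pos h0 (fun ω => (f ω, h ω)) ω h'
      have b2 := pmass_pos h0 (fun ω => (g ω, h ω)) ω h'
      have b3 := pmass_pos h0 (fun ω => (f ω, g ω, h ω)) ω h'
      have b4 := pmass_pos h0 h ω h'
      have hpos : 0 < R (f ω, g ω, h ω) := by
        simp only [hR]; positivity
      have hlog := Real.log_le_sub_one_of_pos hpos
      have e : Real.log (R (f ω, g ω, h ω)) =
          Real.log (pmass q (fun ω => (f ω, h ω)) (f ω, h ω))
          + Real.log (pmass q (fun ω => (g ω, h ω)) (g ω, h ω))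
          - (Real.log (pmass q (fun ω => (f ω, g ω, h ω)) (f ω, g ω, h ω))
            + Real.log (pmass q h (h ω))) := by
        simp only [hR]
        rw [Real.log_div (by positivity) (by positivity), Real.log_mul b1.ne' b2.ne',
          Real.log_mul b3.ne' b4.ne']
      rw [e] at hlog
      have := mul_le_mul_of_nonneg_left hlog h'.le
      simp only [Real.logb]
      rw [le_div_iff₀ hl2]
      refine le_trans (le_of_eq ?_) (this.trans (le_of_eq ?_))
      · field_simp
        ring
      · ring
  have tot := Finset.sum_le_sum fun ω (_ : ω ∈ Finset.univ) => pt ω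
  rw [← Finset.sum_div, Finset.sum_sub_distrib, Finset.sum_sub_distrib, Finset.sum_sub_distrib,
    Finset.sum_add_distrib, h1] at tot
  have : (∑ ω, q ω * R (f ω, g ω, h ω) - 1) / Real.log 2 ≤ 0 :=
    div_nonpos_of_nonpos_of_nonneg (by linarith) hl2.le
  simp only [ent_eq]
  linarith

theorem ent_indep {Ω α : Type*} [Fintype Ω] [Fintype α] [DecidableEq α] {n : ℕ}
    (p : Ω → ℝ) (hp : IsPMF p) (X : Fin n → Ω → α)
    (hindep : ∀ xs : Fin n → α,
      pmass p (fun ω => (fun i => X i ω)) xs = ∏ i, pmass p (X i) (xs i)) :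
    ent p (fun ω => (fun i => X i ω)) = ∑ i, ent p (X i) := by
  simp only [ent_eq, hindep]
  rw [Finset.sum_neg_distrib, Finset.sum_comm]
  congr 1
  refine Finset.sum_congr rfl fun ω _ => ?_
  rcases (hp.1 ω).eq_or_lt with h' | h'
  · simp [← h']
  · rw [← Finset.mul_sum]
    congr 1
    simp only [Real.logb]
    rw [Real.log_prod (fun i _ => (pmass_pos hp.1 (X i) ω h').ne'), Finset.sum_div]

theorem lt_succ_fun_iff {n : ℕ} {α : Type*} (x y : Fin n → α) (i : Fin n) :
    (∀ j : Fin n, j.1 < i.1 + 1 → x j = y j) ↔ (x i = y i ∧ ∀ j : Fin n, j.1 < i.1 → x j = y j) := by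
  constructor
  · intro h
    exact ⟨h i (by omega), fun j hj => h j (by omega)⟩
  · rintro ⟨h1, h2⟩ j hj
    rcases Nat.lt_succ_iff_lt_or_eq.mp hj with h | h
    · exact h2 j h
    · rw [Fin.ext h]; exact h1

theorem ne_fun_iff {n : ℕ} {α : Type*} (x y : Fin n → α) (i : Fin n) :
    (∀ j : Fin n, x j = y j) ↔ (x i = y i ∧ ∀ j : Fin n, j ≠ i → x j = y j) := by
  constructor
  · intro h
    exact ⟨h i, fun j _ => h j⟩
  · rintro ⟨h1, h2⟩ j
    by_cases h : j = i
    · rw [h]; exact h1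
    · exact h2 j h

/-- Let `X₁,…,Xₙ` be mutually independent, `T` a deterministic function of
`Xⁿ`, `Aⁿ` a deterministic function of `T`, and suppose
`H(Yⁿ|(Aⁿ,Xⁿ)) = ∑ᵢ H(Yᵢ|(Aᵢ,Xᵢ))` (memoryless side-information channel). Then
`H(T) ≥ ∑ᵢ [ I(Xᵢ;Aᵢ) + I(Xᵢ;Uᵢ|Yᵢ,Aᵢ) ]` where
`Uᵢ = (A^{n∖i}, Y^{n∖i}, X^{i−1}, T)`. -/
theorem converse_chain_decoder_actions {Ω 𝒳 𝒜 𝒴 𝒯 : Type*} [Fintype Ω]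
    [Fintype 𝒳] [DecidableEq 𝒳] [Fintype 𝒜] [DecidableEq 𝒜]
    [Fintype 𝒴] [DecidableEq 𝒴] [Fintype 𝒯] [DecidableEq 𝒯]
    (p : Ω → ℝ) (hp : IsPMF p) {n : ℕ}
    (X : Fin n → Ω → 𝒳) (A : Fin n → Ω → 𝒜) (Y : Fin n → Ω → 𝒴) (T : Ω → 𝒯)
    (hindep : ∀ xs : Fin n → 𝒳,
      pmass p (fun ω => (fun i => X i ω)) xs = ∏ i, pmass p (X i) (xs i))
    (hT : ∃ φ : (Fin n → 𝒳) → 𝒯, ∀ ω, T ω = φ (fun i => X i ω))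
    (hA : ∃ ψ : 𝒯 → Fin n → 𝒜, ∀ ω i, A i ω = ψ (T ω) i)
    (hY : condEnt p (fun ω => (fun i => Y i ω))
        (fun ω => ((fun i => A i ω), (fun i => X i ω))) =
      ∑ i, condEnt p (Y i) (fun ω => (A i ω, X i ω))) :
    ent p T ≥ ∑ i, (mutInf p (X i) (A i) +
      condMutInf p (X i)
        (fun ω => ((fun j : {j : Fin n // j ≠ i} => A j.1 ω),
                   (fun j : {j : Fin n // j ≠ i} => Y j.1 ω),
                   (fun j : {j : Fin n // j.1 < i} => X j.1 ω), T ω))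
        (fun ω => (Y i ω, A i ω))) := by
  obtain ⟨φ, hφ⟩ := hT
  obtain ⟨ψ, hψ⟩ := hA
  have hTX : ∀ ω ω', (∀ i, X i ω = X i ω') → T ω = T ω' := by
    intro ω ω' h
    rw [hφ, hφ]
    congr 1
    funext i
    exact h i
  have hAT : ∀ ω ω', T ω = T ω' → ∀ i, A i ω = A i ω' := by
    intro ω ω' h i
    rw [hψ, hψ, h]
  have hX := ent_indep p hp X hindep
  -- chain rule for `X` given `(Y^n, T)`
  let F : ℕ → ℝ := fun k => ent p (fun ω => ((fun i => Y i ω), T ω,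
    (fun j : {j : Fin n // j.1 < k} => X j.1 ω)))
  let G : ℕ → ℝ := fun k => ent p (fun ω => (T ω, (fun j : {j : Fin n // j.1 < k} => Y j.1 ω)))
  have hF : ∑ i : Fin n, (F (i.1 + 1) - F i.1) = F n - F 0 := by
    rw [Fin.sum_univ_eq_sum_range (fun k => F (k + 1) - F k) n, Finset.sum_range_sub]
  have hG : ∑ i : Fin n, (G (i.1 + 1) - G i.1) = G n - G 0 := by
    rw [Fin.sum_univ_eq_sum_range (fun k => G (k + 1) - G k) n, Finset.sum_range_sub]
  have hF0 : F 0 = G n := by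
    refine ent_congr p _ _ fun ω ω' => ?_
    simp only [Prod.mk.injEq, funext_iff, Subtype.forall]
    constructor
    · rintro ⟨h1, h2, -⟩
      exact ⟨h2, fun a _ => h1 a⟩
    · rintro ⟨h1, h2⟩
      exact ⟨fun a => h2 a a.2, h1, fun a ha => absurd ha (Nat.not_lt_zero _)⟩
  have hFn : F n = ent p (fun ω => ((fun i => Y i ω), (fun i => A i ω), (fun i => X i ω))) := by
    refine ent_congr p _ _ fun ω ω' => ?_
    simp only [Prod.mk.injEq, funext_iff, Subtype.forall]
    constructor
    · rintro ⟨h1, h2, h3⟩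
      exact ⟨h1, hAT _ _ h2, fun a => h3 a a.2⟩
    · rintro ⟨h1, h2, h3⟩
      exact ⟨h1, hTX _ _ h3, fun a _ => h3 a⟩
  have hAX : ent p (fun ω => ((fun i => A i ω), (fun i => X i ω))) =
      ent p (fun ω => (fun i => X i ω)) := by
    refine ent_congr p _ _ fun ω ω' => ?_
    simp only [Prod.mk.injEq, funext_iff]
    exact ⟨fun h => h.2, fun h => ⟨hAT _ _ (hTX _ _ h), h⟩⟩
  have hG0 : G 0 = ent p T := by
    refine ent_congr p _ _ fun ω ω' => ?_
    simp only [Prod.mk.injEq, funext_iff, Subtype.forall]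
    exact ⟨fun h => h.1, fun h => ⟨h, fun a ha => absurd ha (Nat.not_lt_zero _)⟩⟩
  have hGstep : ∀ i : Fin n, G (i.1 + 1) - G i.1 ≤ condEnt p (Y i) (A i) := by
    intro i
    have hs := ent_submod p hp (Y i)
      (fun ω => (T ω, (fun j : {j : Fin n // j.1 < i.1} => Y j.1 ω))) (A i)
    have e1 : ent p (fun ω => (Y i ω, (T ω, (fun j : {j : Fin n // j.1 < i.1} => Y j.1 ω)), A i ω))
        = G (i.1 + 1) := by
      refine ent_congr p _ _ fun ω ω' => ?_
      simp only [Prod.mk.injEq, funext_iff, Subtype.forall]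
      rw [lt_succ_fun_iff (fun j => Y j ω) (fun j => Y j ω') i]
      have := hAT ω ω'
      constructor
      · rintro ⟨h1, ⟨h2, h3⟩, -⟩
        exact ⟨h2, h1, h3⟩
      · rintro ⟨h2, h1, h3⟩
        exact ⟨h1, ⟨h2, h3⟩, this h2 i⟩
    have e2 : ent p (fun ω => ((T ω, (fun j : {j : Fin n // j.1 < i.1} => Y j.1 ω)), A i ω))
        = G i.1 := by
      refine ent_congr p _ _ fun ω ω' => ?_
      simp only [Prod.mk.injEq]
      exact ⟨fun h => h.1, fun h => ⟨h, hAT _ _ h.1 i⟩⟩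
    rw [e1, e2] at hs
    rw [condEnt]
    linarith
  have hterm : ∀ i : Fin n, (mutInf p (X i) (A i) +
      condMutInf p (X i)
        (fun ω => ((fun j : {j : Fin n // j ≠ i} => A j.1 ω),
                   (fun j : {j : Fin n // j ≠ i} => Y j.1 ω),
                   (fun j : {j : Fin n // j.1 < i} => X j.1 ω), T ω))
        (fun ω => (Y i ω, A i ω))) =
      ent p (X i) + condEnt p (Y i) (fun ω => (A i ω, X i ω)) - condEnt p (Y i) (A i)
        - (F (i.1 + 1) - F i.1) := by
    intro i
    simp only [mutInf, condMutInf, condEnt]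
    have e1 : ent p (fun ω => (X i ω, Y i ω, A i ω)) = ent p (fun ω => (Y i ω, A i ω, X i ω)) := by
      refine ent_congr p _ _ fun ω ω' => ?_
      simp only [Prod.mk.injEq]
      tauto
    have e2 : ent p (fun ω => (A i ω, X i ω)) = ent p (fun ω => (X i ω, A i ω)) := by
      refine ent_congr p _ _ fun ω ω' => ?_
      simp only [Prod.mk.injEq]
      tauto
    have e3 : ent p (fun ω => (((fun j : {j : Fin n // j ≠ i} => A j.1 ω),
                   (fun j : {j : Fin n // j ≠ i} => Y j.1 ω),
                   (fun j : {j : Fin n // j.1 < i} => X j.1 ω), T ω), Y i ω, A i ω)) = F i.1 := by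
      refine ent_congr p _ _ fun ω ω' => ?_
      simp only [Prod.mk.injEq, funext_iff, Subtype.forall]
      rw [ne_fun_iff (fun j => Y j ω) (fun j => Y j ω') i]
      have := hAT ω ω'
      constructor
      · rintro ⟨⟨h1, h2, h3, h4⟩, h5, h6⟩
        exact ⟨⟨h5, h2⟩, h4, h3⟩
      · rintro ⟨⟨h5, h2⟩, h4, h3⟩
        exact ⟨⟨fun a _ => this h4 a, h2, h3, h4⟩, h5, this h4 i⟩
    set_option synthInstance.maxSize 8192 in
    have e4 : ent p (fun ω => (X i ω, ((fun j : {j : Fin n // j ≠ i} => A j.1 ω),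
                   (fun j : {j : Fin n // j ≠ i} => Y j.1 ω),
                   (fun j : {j : Fin n // j.1 < i} => X j.1 ω), T ω), Y i ω, A i ω))
        = F (i.1 + 1) := by
      refine ent_congr p _ _ fun ω ω' => ?_
      simp only [Prod.mk.injEq, funext_iff, Subtype.forall]
      rw [ne_fun_iff (fun j => Y j ω) (fun j => Y j ω') i,
        lt_succ_fun_iff (fun j => X j ω) (fun j => X j ω') i]
      have := hAT ω ω'
      constructor
      · rintro ⟨h0, ⟨h1, h2, h3, h4⟩, h5, h6⟩
        exact ⟨⟨h5, h2⟩, h4, h0, h3⟩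
      · rintro ⟨⟨h5, h2⟩, h4, h0, h3⟩
        exact ⟨h0, ⟨fun a _ => this h4 a, h2, h3, h4⟩, h5, this h4 i⟩
    rw [e1, e2, e3, e4]
    ring
  rw [Finset.sum_congr rfl fun i _ => hterm i, Finset.sum_sub_distrib, Finset.sum_sub_distrib,
    Finset.sum_add_distrib, hF, ← hX, ← hY, hF0, hFn]
  have hGsum := Finset.sum_le_sum fun i (_ : i ∈ (Finset.univ : Finset (Fin n))) => hGstep i
  rw [hG, hG0] at hGsum
  rw [condEnt, hAX]
  linarith
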